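/- For a real number r and positive reals a, b, let M_r(a, b; 2/3) denote the weighted power mean with weights 2/3 and 1/3: M_r(a, b; 2/3) = ((2/3)·a^r + (1/3)·b^r)^(1/r) if r ≠ 0, and M_0(a, b; 2/3) = a^(2/3)·b^(1/3). Then for real numbers α, β, the double inequality M_α(1, cosh x; 2/3) < sinh(x)/x < M_β(1, cosh x; 2/3) holds for every x ∈ (0, ∞) if and only if α ≤ 0 and β ≥ 4/5. -/

import Mathlib

open Real Set

/-- The weighted power mean of `a` and `b` with weights `2/3` and `1/3`. -/
noncomputable def weightedPowerMean (r a b : ℝ) : ℝ :=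
  if r = 0 then a ^ ((2 : ℝ) / 3) * b ^ ((1 : ℝ) / 3)
  else (2 / 3 * a ^ r + 1 / 3 * b ^ r) ^ (1 / r)

lemma wpm_ne {r : ℝ} (hr : r ≠ 0) (c : ℝ) :
    weightedPowerMean r 1 c = (2 / 3 + 1 / 3 * c ^ r) ^ (1 / r) := by
  simp [weightedPowerMean, hr]

lemma wpm_zero (c : ℝ) : weightedPowerMean 0 1 c = c ^ ((1 : ℝ) / 3) := by
  simp [weightedPowerMean]

lemma amgm (r : ℝ) {c : ℝ} (hc : 0 < c) : c ^ (r / 3) ≤ 2 / 3 + 1 / 3 * c ^ r := by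
  have h := Real.geom_mean_le_arith_mean2_weighted (w₁ := 2/3) (w₂ := 1/3) (p₁ := 1)
    (p₂ := c ^ r) (by norm_num) (by norm_num) (by norm_num) (by positivity) (by norm_num)
  rw [Real.one_rpow, one_mul, ← Real.rpow_mul hc.le] at h
  calc c ^ (r / 3) = c ^ (r * (1 / 3)) := by congr 1; ring
    _ ≤ _ := by linarith

lemma wpm_nonpos {r : ℝ} (hr : r ≤ 0) {c : ℝ} (hc : 0 < c) :
    weightedPowerMean r 1 c ≤ c ^ ((1 : ℝ) / 3) := by
  rcases eq_or_lt_of_le hr with rfl | hr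
  · rw [wpm_zero]
  · rw [wpm_ne hr.ne]
    have h := Real.rpow_le_rpow_of_nonpos (by positivity) (amgm r hc)
      (one_div_neg.mpr hr).le
    rw [← Real.rpow_mul hc.le] at h
    have e : r / 3 * (1 / r) = 1 / 3 := by field_simp [hr.ne]
    rwa [e] at h

lemma wpm_pos {r : ℝ} (hr : 0 < r) {c : ℝ} (hc : 0 < c) :
    c ^ ((1 : ℝ) / 3) ≤ weightedPowerMean r 1 c := by
  rw [wpm_ne hr.ne']
  have h := Real.rpow_le_rpow (by positivity) (amgm r hc) (one_div_pos.mpr hr).le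
  rw [← Real.rpow_mul hc.le] at h
  have e : r / 3 * (1 / r) = 1 / 3 := by field_simp [hr.ne']
  rwa [e] at h

lemma wpm_mono_pos {r s : ℝ} (hr : 0 < r) (hrs : r ≤ s) {c : ℝ} (hc : 0 < c) :
    weightedPowerMean r 1 c ≤ weightedPowerMean s 1 c := by
  have hs : 0 < s := hr.trans_le hrs
  rw [wpm_ne hr.ne', wpm_ne hs.ne']
  have h := (convexOn_rpow (p := s / r) ((one_le_div hr).mpr hrs)).2
    (mem_Ici.mpr (zero_le_one (α := ℝ))) (mem_Ici.mpr (Real.rpow_pos_of_pos hc r).le)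
    (by norm_num : (0 : ℝ) ≤ 2 / 3) (by norm_num : (0 : ℝ) ≤ 1 / 3) (by norm_num)
  simp only [smul_eq_mul] at h
  rw [Real.one_rpow, mul_one, ← Real.rpow_mul hc.le] at h
  have e : r * (s / r) = s := by field_simp
  rw [e] at h
  have h2 := Real.rpow_le_rpow (by positivity) h (one_div_pos.mpr hs).le
  rw [← Real.rpow_mul (by positivity)] at h2
  have e2 : s / r * (1 / s) = 1 / r := by field_simp
  rwa [e2] at h2

lemma wpm_mono_pos' {r s : ℝ} (hs : 0 < s) (hrs : r ≤ s) {c : ℝ} (hc : 0 < c) :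
    weightedPowerMean r 1 c ≤ weightedPowerMean s 1 c := by
  rcases le_or_gt r 0 with h | h
  · exact (wpm_nonpos h hc).trans (wpm_pos hs hc)
  · exact wpm_mono_pos h hrs hc

/-- the derivative ratio -/
noncomputable def DD (γ c : ℝ) : ℝ :=
  (2 * c + c ^ (γ - 1)) / 3 * (2 / 3 + 1 / 3 * c ^ γ) ^ (-1 / γ - 1)

noncomputable def NN (γ c : ℝ) : ℝ :=
  2 - γ * c ^ γ - (1 - γ) * c ^ (γ - 2) - c ^ (2 * γ - 2)

noncomputable def FF (γ x : ℝ) : ℝ :=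
  sinh x * (2 / 3 + 1 / 3 * cosh x ^ γ) ^ (-1 / γ)

lemma DD_one (γ : ℝ) : DD γ 1 = 1 := by
  simp only [DD, Real.one_rpow]; norm_num

lemma FF_zero (γ : ℝ) : FF γ 0 = 0 := by simp [FF]

lemma hasDerivAt_FF {γ : ℝ} (hγ : 0 < γ) (x : ℝ) :
    HasDerivAt (FF γ) (DD γ (cosh x)) x := by
  have hc := Real.cosh_pos x
  have hG : 0 < 2 / 3 + 1 / 3 * cosh x ^ γ := by positivity
  have h1 : HasDerivAt (fun x => 2 / 3 + 1 / 3 * cosh x ^ γ)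
      (1 / 3 * (sinh x * γ * cosh x ^ (γ - 1))) x :=
    (((Real.hasDerivAt_cosh x).rpow_const (Or.inl hc.ne')).const_mul _).const_add _
  have h2 := (Real.hasDerivAt_sinh x).mul (h1.rpow_const (p := -1 / γ) (Or.inl hG.ne'))
  refine h2.congr_deriv ?_
  unfold DD
  have e1 : (2 / 3 + 1 / 3 * cosh x ^ γ) ^ (-1 / γ) =
      (2 / 3 + 1 / 3 * cosh x ^ γ) ^ (-1 / γ - 1) * (2 / 3 + 1 / 3 * cosh x ^ γ) := by
    rw [← Real.rpow_add_one hG.ne']; congr 1; ring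
  have e2 : cosh x ^ γ = cosh x ^ (γ - 1) * cosh x := by
    rw [← Real.rpow_add_one hc.ne']; congr 1; ring
  rw [e1]
  generalize (2 / 3 + 1 / 3 * cosh x ^ γ) ^ (-1 / γ - 1) = A
  rw [e2]
  have hs := Real.cosh_sq x
  generalize cosh x ^ (γ - 1) = B
  field_simp
  linear_combination (A * B) * hs

lemma hasDerivAt_DD {γ : ℝ} (hγ : 0 < γ) {c : ℝ} (hc : 0 < c) :
    HasDerivAt (DD γ) ((2 / 9 * (2 / 3 + 1 / 3 * c ^ γ) ^ (-1 / γ - 2)) * NN γ c) c := by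
  have hG : 0 < 2 / 3 + 1 / 3 * c ^ γ := by positivity
  have h1 : HasDerivAt (fun c : ℝ => 2 / 3 + 1 / 3 * c ^ γ)
      (1 / 3 * (1 * γ * c ^ (γ - 1))) c :=
    (((hasDerivAt_id c).rpow_const (Or.inl hc.ne')).const_mul _).const_add _
  have h0 : HasDerivAt (fun c : ℝ => (2 * c + c ^ (γ - 1)) / 3)
      ((2 * 1 + (1 * (γ - 1) * c ^ (γ - 1 - 1))) / 3) c :=
    (((hasDerivAt_id c).const_mul 2).add
      ((hasDerivAt_id c).rpow_const (Or.inl hc.ne'))).div_const 3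
  have h2 := h0.mul (h1.rpow_const (p := -1 / γ - 1) (Or.inl hG.ne'))
  refine h2.congr_deriv ?_
  unfold NN
  have e0 : -1 / γ - 1 - 1 = -1 / γ - 2 := by ring
  have e1 : (2 / 3 + 1 / 3 * c ^ γ) ^ (-1 / γ - 1) =
      (2 / 3 + 1 / 3 * c ^ γ) ^ (-1 / γ - 2) * (2 / 3 + 1 / 3 * c ^ γ) := by
    rw [← Real.rpow_add_one hG.ne']; congr 1; ring
  have e2 : c ^ γ = c ^ (γ - 2) * c ^ 2 := by
    rw [← Real.rpow_natCast, ← Real.rpow_add hc]; congr 1; norm_num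
  have e3 : c ^ (γ - 1) = c ^ (γ - 2) * c := by
    rw [← Real.rpow_add_one hc.ne']; congr 1; ring
  have e4 : c ^ (2 * γ - 2) = c ^ (γ - 2) * c ^ (γ - 2) * c ^ 2 := by
    rw [← Real.rpow_natCast, ← Real.rpow_add hc, ← Real.rpow_add hc]; congr 1; push_cast; ring
  have e5 : γ - 1 - 1 = γ - 2 := by ring
  rw [e0, e1, e5]
  generalize (2 / 3 + 1 / 3 * c ^ γ) ^ (-1 / γ - 2) = A
  rw [e4, e3, e2]
  generalize c ^ (γ - 2) = B
  field_simp
  ring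

lemma FF_gt {γ C : ℝ} (hγ : 0 < γ) (hN : ∀ c, 1 < c → c < C → 0 < NN γ c)
    {x : ℝ} (hx : 0 < x) (hxC : cosh x < C) : x < FF γ x := by
  have hD : StrictMonoOn (DD γ) (Ico 1 C) := by
    apply strictMonoOn_of_deriv_pos (convex_Ico 1 C)
    · intro c hc
      exact (hasDerivAt_DD hγ (by linarith [hc.1])).continuousAt.continuousWithinAt
    · intro c hc
      rw [interior_Ico] at hc
      have h0 : 0 < c := by linarith [hc.1]
      rw [(hasDerivAt_DD hγ h0).deriv]
      have := hN c hc.1 hc.2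
      positivity
  have hF : StrictMonoOn (fun y => FF γ y - y) (Icc 0 x) := by
    apply strictMonoOn_of_deriv_pos (convex_Icc 0 x)
    · intro c hc
      exact ((hasDerivAt_FF hγ c).sub (hasDerivAt_id c)).continuousAt.continuousWithinAt
    · intro y hy
      rw [interior_Icc] at hy
      have hd : HasDerivAt (fun y => FF γ y - y) (DD γ (cosh y) - 1) y :=
        (hasDerivAt_FF hγ y).sub (hasDerivAt_id y)
      rw [hd.deriv]
      have h1 : 1 < cosh y := Real.one_lt_cosh.mpr hy.1.ne'
      have h2 : cosh y < cosh x :=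
        Real.cosh_lt_cosh.mpr (by rw [abs_of_pos hy.1, abs_of_pos hx]; exact hy.2)
      have := hD (a := 1) (b := cosh y) ⟨le_rfl, by linarith⟩ ⟨h1.le, by linarith⟩ h1
      rw [DD_one] at this
      linarith
  have := hF (a := 0) (b := x) ⟨le_rfl, hx.le⟩ ⟨hx.le, le_rfl⟩ hx
  simp only [FF_zero] at this
  linarith

lemma FF_lt {γ : ℝ} (hγ : 0 < γ) (hN : ∀ c, 1 < c → NN γ c < 0)
    {x : ℝ} (hx : 0 < x) : FF γ x < x := by
  have hD : StrictAntiOn (DD γ) (Ici 1) := by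
    apply strictAntiOn_of_deriv_neg (convex_Ici 1)
    · intro c hc
      exact (hasDerivAt_DD hγ (lt_of_lt_of_le one_pos hc)).continuousAt.continuousWithinAt
    · intro c hc
      rw [interior_Ici] at hc
      have h0 : 0 < c := lt_trans one_pos hc
      rw [(hasDerivAt_DD hγ h0).deriv]
      have := hN c hc
      exact mul_neg_of_pos_of_neg (by positivity) this
  have hF : StrictAntiOn (fun y => FF γ y - y) (Icc 0 x) := by
    apply strictAntiOn_of_deriv_neg (convex_Icc 0 x)
    · intro c hc
      exact ((hasDerivAt_FF hγ c).sub (hasDerivAt_id c)).continuousAt.continuousWithinAt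
    · intro y hy
      rw [interior_Icc] at hy
      have hd : HasDerivAt (fun y => FF γ y - y) (DD γ (cosh y) - 1) y :=
        (hasDerivAt_FF hγ y).sub (hasDerivAt_id y)
      rw [hd.deriv]
      have h1 : 1 < cosh y := Real.one_lt_cosh.mpr hy.1.ne'
      have := hD (a := 1) (b := cosh y) (le_refl (1:ℝ)) h1.le h1
      rw [DD_one] at this
      linarith
  have := hF (a := 0) (b := x) ⟨le_rfl, hx.le⟩ ⟨hx.le, le_rfl⟩ hx
  simp only [FF_zero] at this
  linarith

lemma FF_eq {γ : ℝ} (hγ : 0 < γ) (x : ℝ) :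
    FF γ x = sinh x / weightedPowerMean γ 1 (cosh x) := by
  have hc := Real.cosh_pos x
  rw [wpm_ne hγ.ne', FF, neg_div, Real.rpow_neg (by positivity)]
  rfl

lemma wpm_gt_zero {γ : ℝ} (hγ : 0 < γ) (x : ℝ) : 0 < weightedPowerMean γ 1 (cosh x) := by
  have hc := Real.cosh_pos x
  rw [wpm_ne hγ.ne']
  positivity

lemma NN_neg {c : ℝ} (hc : 1 < c) : NN (4 / 5) c < 0 := by
  have h0 : 0 < c := by linarith
  set w := c ^ ((2 : ℝ) / 5) with hw
  have hw1 : 1 < w := Real.one_lt_rpow hc (by norm_num)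
  have hw0 : 0 < w := by linarith
  have e1 : c ^ ((4 : ℝ) / 5) = w ^ 2 := by
    rw [hw, ← Real.rpow_natCast, ← Real.rpow_mul h0.le]; norm_num
  have e2 : c ^ ((4 : ℝ) / 5 - 2) = (w ^ 3)⁻¹ := by
    rw [hw, ← Real.rpow_natCast, ← Real.rpow_mul h0.le, ← Real.rpow_neg h0.le]; norm_num
  have e3 : c ^ (2 * ((4 : ℝ) / 5) - 2) = w⁻¹ := by
    rw [hw, ← Real.rpow_neg h0.le]; norm_num
  rw [NN, e1, e2, e3]
  have e : 2 - 4 / 5 * w ^ 2 - (1 - 4 / 5) * (w ^ 3)⁻¹ - w⁻¹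
      = -((w - 1) ^ 2 * (4 * w ^ 3 + 8 * w ^ 2 + 2 * w + 1)) / (5 * w ^ 3) := by
    field_simp
    ring
  rw [e]
  have : 0 < (w - 1) ^ 2 := by have : 0 < w - 1 := by linarith
                               positivity
  apply div_neg_of_neg_of_pos _ (by positivity)
  have : 0 < (w - 1) ^ 2 * (4 * w ^ 3 + 8 * w ^ 2 + 2 * w + 1) := by positivity
  linarith

lemma NN_pos {γ : ℝ} (hγ : γ < 4 / 5) : ∃ C > 1, ∀ c, 1 < c → c < C → 0 < NN γ c := by
  have hr : ∀ p : ℝ, HasDerivAt (fun c : ℝ => c ^ p) p 1 := fun p => by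
    simpa using Real.hasDerivAt_rpow_const (x := 1) (p := p) (Or.inl one_ne_zero)
  have hd : HasDerivAt (NN γ) (4 - 5 * γ) 1 := by
    have := ((((hr γ).const_mul γ).const_sub 2).sub ((hr (γ - 2)).const_mul (1 - γ))).sub
      (hr (2 * γ - 2))
    refine this.congr_deriv ?_
    ring
  have hN1 : NN γ 1 = 0 := by simp only [NN, Real.one_rpow]; ring
  have ht := (hasDerivAt_iff_tendsto_slope.mp hd).eventually (lt_mem_nhds (by linarith : 0 < 4 - 5 * γ))
  have ht2 : ∀ᶠ c in nhdsWithin (1:ℝ) (Ioi 1), 0 < slope (NN γ) 1 c :=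
    ht.filter_mono (nhdsWithin_mono _ (fun c hc => ne_of_gt hc))
  obtain ⟨C, hC, h⟩ := mem_nhdsGT_iff_exists_Ioo_subset.mp ht2
  refine ⟨C, hC, fun c h1 h2 => ?_⟩
  have := h ⟨h1, h2⟩
  simp only [mem_ofPred_eq, slope_def_field, hN1, sub_zero] at this
  exact (div_pos_iff_of_pos_right (by linarith)).mp this

/-- Lazarevic inequality -/
lemma lazarevic {x : ℝ} (hx : 0 < x) : cosh x ^ ((1 : ℝ) / 3) < sinh x / x := by
  have hd : ∀ y : ℝ, HasDerivAt (fun y => sinh y * cosh y ^ (-(1 : ℝ) / 3) - y)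
      ((2 * cosh y ^ 2 + 1) / 3 * cosh y ^ (-(4 : ℝ) / 3) - 1) y := by
    intro y
    have hc := Real.cosh_pos y
    have := ((Real.hasDerivAt_sinh y).mul
      ((Real.hasDerivAt_cosh y).rpow_const (p := -(1 : ℝ) / 3) (Or.inl hc.ne'))).sub
      (hasDerivAt_id y)
    refine this.congr_deriv ?_
    have e : (-(1 : ℝ) / 3 - 1) = -4 / 3 := by norm_num
    have e1 : cosh y ^ (-(1 : ℝ) / 3) = cosh y ^ (-(4 : ℝ) / 3) * cosh y := by
      rw [← Real.rpow_add_one hc.ne']; congr 1; norm_num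
    rw [e, e1]
    have hs := Real.cosh_sq y
    generalize cosh y ^ (-(4 : ℝ) / 3) = B
    linear_combination (B / 3) * hs
  have hF : StrictMonoOn (fun y => sinh y * cosh y ^ (-(1 : ℝ) / 3) - y) (Icc 0 x) := by
    apply strictMonoOn_of_deriv_pos (convex_Icc 0 x)
    · intro c hc
      exact (hd c).continuousAt.continuousWithinAt
    · intro y hy
      rw [interior_Icc] at hy
      rw [(hd y).deriv]
      have h1 : 1 < cosh y := Real.one_lt_cosh.mpr hy.1.ne'
      have h0 := Real.cosh_pos y
      set w := cosh y ^ ((2 : ℝ) / 3) with hw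
      have hw1 : 1 < w := Real.one_lt_rpow h1 (by norm_num)
      have e1 : cosh y ^ 2 = w ^ 3 := by
        rw [hw, ← Real.rpow_natCast, ← Real.rpow_natCast, ← Real.rpow_mul h0.le]; norm_num
      have e2 : cosh y ^ (-(4 : ℝ) / 3) = (w ^ 2)⁻¹ := by
        rw [hw, ← Real.rpow_natCast, ← Real.rpow_mul h0.le, ← Real.rpow_neg h0.le]; norm_num
      rw [e1, e2, sub_pos, ← div_eq_mul_inv, one_lt_div (by positivity)]
      nlinarith [mul_pos (sub_pos.mpr hw1) (sub_pos.mpr hw1),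
        mul_pos (mul_pos (sub_pos.mpr hw1) (sub_pos.mpr hw1)) (by linarith : 0 < w)]
  have h := hF (a := 0) (b := x) ⟨le_rfl, hx.le⟩ ⟨hx.le, le_rfl⟩ hx
  simp only [sinh_zero, zero_mul, sub_zero] at h
  rw [neg_div, Real.rpow_neg (Real.cosh_pos x).le, ← div_eq_mul_inv, sub_pos] at h
  have hp : 0 < cosh x ^ ((1 : ℝ) / 3) := Real.rpow_pos_of_pos (Real.cosh_pos x) _
  rw [lt_div_iff₀ hp] at h
  rw [lt_div_iff₀ hx]
  linarith

theorem powerMean_sinh_bounds (α β : ℝ) :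
    (∀ x ∈ Ioi (0 : ℝ),
        weightedPowerMean α 1 (cosh x) < sinh x / x ∧
          sinh x / x < weightedPowerMean β 1 (cosh x)) ↔
      (α ≤ 0 ∧ β ≥ 4 / 5) := by
  constructor
  · intro h
    constructor
    · by_contra! hα
      set x : ℝ := (3 : ℝ) ^ (1 / α) with hxdef
      have hx : 0 < x := by positivity
      have h1 := (h x hx).1
      have hc := Real.cosh_pos x
      rw [wpm_ne hα.ne'] at h1
      have h2 : (1 / 3 * cosh x ^ α) ^ (1 / α) ≤ (2 / 3 + 1 / 3 * cosh x ^ α) ^ (1 / α) :=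
        Real.rpow_le_rpow (by positivity) (by linarith) (by positivity)
      have h3 : (1 / 3 * cosh x ^ α) ^ (1 / α) = cosh x / x := by
        rw [Real.mul_rpow (by norm_num) (by positivity), ← Real.rpow_mul hc.le,
          mul_one_div_cancel hα.ne', Real.rpow_one, Real.div_rpow (by norm_num) (by norm_num),
          Real.one_rpow, ← hxdef]
        ring
      rw [h3] at h2
      have h4 : sinh x / x < cosh x / x := div_lt_div_of_pos_right (Real.sinh_lt_cosh x) hx
      linarith
    · by_contra! hβ
      set γ := max β (1 / 2) with hγdef
      have hγ : 0 < γ := lt_of_lt_of_le (by norm_num) (le_max_right _ _)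
      have hγ2 : γ < 4 / 5 := max_lt hβ (by norm_num)
      obtain ⟨C, hC, hN⟩ := NN_pos hγ2
      have hev : ∀ᶠ x in nhdsWithin (0:ℝ) (Ioi 0), cosh x < C := by
        apply Filter.Eventually.filter_mono nhdsWithin_le_nhds
        exact Real.continuous_cosh.continuousAt.eventually (gt_mem_nhds (by simpa using hC))
      obtain ⟨x, hxC, hx⟩ := (hev.and self_mem_nhdsWithin).exists
      have hx : 0 < x := hx
      have h1 := (h x hx).2
      have h2 := wpm_mono_pos' hγ (le_max_left β (1 / 2)) (Real.cosh_pos x)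
      have h3 := FF_gt hγ hN hx hxC
      rw [FF_eq hγ, lt_div_iff₀ (wpm_gt_zero hγ x)] at h3
      have h4 := h1.trans_le h2
      rw [div_lt_iff₀ hx] at h4
      linarith
  · rintro ⟨hα, hβ⟩ x hx
    have hx : 0 < x := hx
    refine ⟨(wpm_nonpos hα (Real.cosh_pos x)).trans_lt (lazarevic hx), ?_⟩
    refine lt_of_lt_of_le ?_ (wpm_mono_pos' (r := 4 / 5) (by linarith) hβ (Real.cosh_pos x))
    have h45 : (0 : ℝ) < 4 / 5 := by norm_num
    have h3 := FF_lt h45 (fun c hc => NN_neg hc) hx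
    rw [FF_eq h45, div_lt_iff₀ (wpm_gt_zero h45 x)] at h3
    rw [div_lt_iff₀ hx]
    linarith
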